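/- Let (A,·,{·,·}) be a transposed Poisson algebra and fix h ∈ A. Define the linear map α_h : A → A by α_h(x) = h·x. Then (A,·,{·,·},α_h) is a transposed Hom-Poisson algebra; in particular the transposed Hom-Leibniz identity {z·x, α_h(y)} + {α_h(x), z·y} = 2α_h(z)·{x,y} holds for all x,y,z ∈ A. -/

import Mathlib

/-!
The transposed Leibniz rule says that every multiplication operator `D` is a `1/2`-derivation of the
bracket: `2 D{x, y} = {D x, y} + {x, D y}`. Put `S = ∑ {D x, {y, z}}` and `T = ∑ {x, D{y, z}}`, both
sums cyclic. Applying `2 D` to the Jacobi identity gives `S + T = 0`, and adding the Jacobi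
identities in which `D` hits one of the three arguments gives `S + 2 T = 0`; hence `S = 0`, which is
the Hom-Jacobi identity. Moreover, if `D`, `E` and `D ∘ E` are all `1/2`-derivations, then expanding
`4 D(E{x, y})` and removing the two terms that make up `2 D(E{x, y})` leaves
`{E x, D y} + {D x, E y} = 2 D(E{x, y})`, the transposed Hom-Leibniz identity.
-/

theorem op_op_apply_eq_op_apply_op {α : Type*} {op : α → α → α} {f : α → α}
    (hassoc : ∀ x y z, op (op x y) z = op x (op y z))
    (hleft : ∀ x y, f (op x y) = op (f x) y) (hright : ∀ x y, f (op x y) = op x (f y))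
    (x y z : α) : op (op x y) (f z) = op (f x) (op y z) :=
  calc
    op (op x y) (f z) = f (op (op x y) z) := (hright _ _).symm
    _ = f (op x (op y z)) := congrArg f (hassoc x y z)
    _ = op (f x) (op y z) := hleft _ _

section HalfDerivation

variable {R A : Type*} [CommSemiring R] [AddCommGroup A] [Module R A]

/-- `D` is a `1/2`-derivation of the bilinear bracket `br`. The defining identity is multiplied by
`2`, so that it makes sense when `2` is not invertible in `R`. -/
def IsHalfDerivation (br : A →ₗ[R] A →ₗ[R] A) (D : A →ₗ[R] A) : Prop :=
  ∀ x y, (2 : R) • D (br x y) = br (D x) y + br x (D y)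

namespace IsHalfDerivation

variable {br : A →ₗ[R] A →ₗ[R] A} {D E : A →ₗ[R] A}

theorem br_br_add_br_br (hD : IsHalfDerivation br D) (x y z : A) :
    br x (br (D y) z) + br x (br y (D z)) = (2 : R) • br x (D (br y z)) := by
  rw [← map_add, ← hD, map_smul]

theorem hom_jacobi (hD : IsHalfDerivation br D)
    (hjac : ∀ x y z, br x (br y z) + br y (br z x) + br z (br x y) = 0) (x y z : A) :
    br (D x) (br y z) + br (D y) (br z x) + br (D z) (br x y) = 0 := by
  set S := br (D x) (br y z) + br (D y) (br z x) + br (D z) (br x y) with hS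
  set T := br x (D (br y z)) + br y (D (br z x)) + br z (D (br x y)) with hT
  have map_jacobi : S + T = 0 :=
    calc
      S + T = (br (D x) (br y z) + br x (D (br y z))) + (br (D y) (br z x) + br y (D (br z x)))
          + (br (D z) (br x y) + br z (D (br x y))) := by rw [hS, hT]; abel
      _ = (2 : R) • D (br x (br y z) + br y (br z x) + br z (br x y)) := by
        simp only [← hD _ _, map_add, smul_add]
      _ = 0 := by rw [hjac, map_zero, smul_zero]
  have sum_jacobi : S + (2 : R) • T = 0 :=
    calc
      S + (2 : R) • T = S
          + ((br x (br (D y) z) + br x (br y (D z))) + (br y (br (D z) x) + br y (br z (D x)))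
          + (br z (br (D x) y) + br z (br x (D y)))) := by
        simp only [hT, smul_add, hD.br_br_add_br_br]
      _ = (br (D x) (br y z) + br y (br z (D x)) + br z (br (D x) y))
          + (br x (br (D y) z) + br (D y) (br z x) + br z (br x (D y)))
          + (br x (br y (D z)) + br y (br (D z) x) + br (D z) (br x y)) := by rw [hS]; abel
      _ = 0 := by simp only [hjac, add_zero]
  have hT_zero : T = 0 := by
    rwa [two_smul, ← add_assoc, map_jacobi, zero_add] at sum_jacobi
  rwa [hT_zero, add_zero] at map_jacobi

theorem br_add_br_of_comp (hD : IsHalfDerivation br D) (hE : IsHalfDerivation br E)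
    (hDE : IsHalfDerivation br (D ∘ₗ E)) (x y : A) :
    br (E x) (D y) + br (D x) (E y) = (2 : R) • D (E (br x y)) := by
  have hcomp : (2 : R) • D (E (br x y)) = br (D (E x)) y + br x (D (E y)) := hDE x y
  apply add_left_cancel (a := (2 : R) • D (E (br x y)))
  calc
    (2 : R) • D (E (br x y)) + (br (E x) (D y) + br (D x) (E y))
      = (br (D (E x)) y + br (E x) (D y)) + (br (D x) (E y) + br x (D (E y))) := by
        rw [hcomp]; abel
    _ = (2 : R) • D ((2 : R) • E (br x y)) := by rw [← hD, ← hD, hE, map_add, smul_add]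
    _ = (2 : R) • D (E (br x y)) + (2 : R) • D (E (br x y)) := by rw [map_smul, two_smul R (_ • _)]

end IsHalfDerivation

end HalfDerivation

theorem transposedHomPoisson_of_transposedPoisson_alpha_h_general
    {R A : Type*} [CommSemiring R] [AddCommGroup A] [Module R A]
    (mul : A →ₗ[R] A →ₗ[R] A) (br : A →ₗ[R] A →ₗ[R] A)
    (hcomm : ∀ x y : A, mul x y = mul y x)
    (hassoc : ∀ x y z : A, mul (mul x y) z = mul x (mul y z))
    (hjac : ∀ x y z : A, br x (br y z) + br y (br z x) + br z (br x y) = 0)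
    (hleib : ∀ x y z : A, (2 : R) • mul z (br x y) = br (mul z x) y + br x (mul z y))
    (h : A) :
    (∀ x y z : A, mul (mul x y) (mul h z) = mul (mul h x) (mul y z)) ∧
    (∀ x y z : A,
      br (mul h x) (br y z) + br (mul h y) (br z x) + br (mul h z) (br x y) = 0) ∧
    (∀ x y z : A,
      br (mul z x) (mul h y) + br (mul h x) (mul z y) = (2 : R) • mul (mul h z) (br x y)) := by
  have mul_left_comm (x y : A) : mul h (mul x y) = mul x (mul h y) := by
    rw [← hassoc, hcomm h, hassoc]
  have half_derivation (z : A) : IsHalfDerivation br (mul z) := fun x y => hleib x y z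
  have mul_mul_eq_comp (z : A) : mul (mul h z) = mul h ∘ₗ mul z := LinearMap.ext (hassoc h z)
  refine ⟨?_, (half_derivation h).hom_jacobi hjac, fun x y z => ?_⟩
  · exact op_op_apply_eq_op_apply_op (op := fun x y => mul x y) hassoc
      (fun x y => (hassoc h x y).symm) mul_left_comm
  · rw [hassoc]
    exact (half_derivation h).br_add_br_of_comp (half_derivation z)
      (mul_mul_eq_comp z ▸ half_derivation (mul h z)) x y

/-- In a transposed Poisson algebra, for any fixed h, the map
α_h(x) = h·x makes (A,·,{·,·},α_h) a transposed Hom-Poisson algebra. -/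
theorem transposedHomPoisson_of_transposedPoisson_alpha_h
    {K A : Type*} [Field K] [CharZero K] [AddCommGroup A] [Module K A]
    (mul : A →ₗ[K] A →ₗ[K] A) (br : A →ₗ[K] A →ₗ[K] A)
    (hcomm : ∀ x y : A, mul x y = mul y x)
    (hassoc : ∀ x y z : A, mul (mul x y) z = mul x (mul y z))
    (hskew : ∀ x y : A, br x y = - br y x)
    (hjac : ∀ x y z : A, br x (br y z) + br y (br z x) + br z (br x y) = 0)
    (hleib : ∀ x y z : A, (2 : K) • mul z (br x y) = br (mul z x) y + br x (mul z y))
    (h : A) :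
    (∀ x y z : A, mul (mul x y) (mul h z) = mul (mul h x) (mul y z)) ∧
    (∀ x y z : A,
      br (mul h x) (br y z) + br (mul h y) (br z x) + br (mul h z) (br x y) = 0) ∧
    (∀ x y z : A,
      br (mul z x) (mul h y) + br (mul h x) (mul z y) = (2 : K) • mul (mul h z) (br x y)) :=
  transposedHomPoisson_of_transposedPoisson_alpha_h_general mul br hcomm hassoc hjac hleib h
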